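/- Let ℓ and m be odd positive integers, R = F₂[x, y]/(xˡ − 1, yᵐ − 1), and let c, d ∈ R be arbitrary. Then: (1) H is the internal direct sum of H_h and H_v; (2) the ideals ann(c) and ann(d) are principal, say ann(c) = (P) and ann(d) = (Q); and (3) the map R/(c, d) ⊕ R/(c, d) → H sending ([f], [g]) to [f·P, g·Q] is a well-defined R-module isomorphism. -/

import Mathlib

open Submodule

section Core
variable (R : Type*) [CommRing R]

/-- The annihilator ideal of an element `c`: `{r : R | c * r = 0}`. -/
def annI (c : R) : Ideal R := LinearMap.ker (LinearMap.lsmul R R c)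

lemma mem_annI {R : Type*} [CommRing R] {c r : R} : r ∈ annI R c ↔ c * r = 0 := Iff.rfl

/-- `Z = {(f, g) | c * f = d * g}`. -/
def Zsub (c d : R) : Submodule R (R × R) where
  carrier := {p | c * p.1 = d * p.2}
  add_mem' := by
    rintro ⟨a1, a2⟩ ⟨b1, b2⟩ ha hb
    simp only [Set.mem_setOf_eq] at *
    simp [mul_add, ha, hb]
  zero_mem' := by simp
  smul_mem' := by
    rintro r ⟨p1, p2⟩ hp
    simp only [Set.mem_setOf_eq, Prod.smul_fst, Prod.smul_snd, smul_eq_mul] at *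
    rw [mul_left_comm, hp, mul_left_comm]

lemma mem_Zsub {R : Type*} [CommRing R] {c d f g : R} :
    (f, g) ∈ Zsub R c d ↔ c * f = d * g := Iff.rfl

/-- `B = {(d * r, c * r) | r ∈ R}`. -/
def Bsub (c d : R) : Submodule R (R × R) :=
  LinearMap.range ((LinearMap.lsmul R R d).prod (LinearMap.lsmul R R c))

/-- The homology `H = Z / B`. -/
abbrev Hmod (c d : R) := Zsub R c d ⧸ (Bsub R c d).comap (Zsub R c d).subtype

/-- The class `[f, g] ∈ H` of a pair `(f, g)` with `c * f = d * g`. -/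
def Hmk (c d : R) (f g : R) (h : c * f = d * g) : Hmod R c d :=
  Submodule.Quotient.mk ⟨(f, g), h⟩

/-- The submodule of `H` generated by horizontally pure classes `[f, 0]`. -/
def Hpureh (c d : R) : Submodule R (Hmod R c d) :=
  span R {h | ∃ f, ∃ hf : c * f = d * 0, h = Hmk R c d f 0 hf}

/-- The submodule of `H` generated by vertically pure classes `[0, g]`. -/
def Hpurev (c d : R) : Submodule R (Hmod R c d) :=
  span R {h | ∃ g, ∃ hg : c * 0 = d * g, h = Hmk R c d 0 g hg}

/-- The ideal `M = {r ∈ ann(cd) | ∃ f ∈ ann(c), g ∈ ann(d), rd = fd ∧ rc = gc}`. -/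
def Msub (c d : R) : Ideal R where
  carrier := {r | r ∈ annI R (c * d) ∧
    ∃ f ∈ annI R c, ∃ g ∈ annI R d, r * d = f * d ∧ r * c = g * c}
  zero_mem' := ⟨zero_mem _, 0, zero_mem _, 0, zero_mem _, by simp, by simp⟩
  add_mem' := by
    rintro a b ⟨ha, f, hf, g, hg, hfd, hgc⟩ ⟨hb, f', hf', g', hg', hfd', hgc'⟩
    exact ⟨add_mem ha hb, f + f', add_mem hf hf', g + g', add_mem hg hg',
      by rw [add_mul, add_mul, hfd, hfd'], by rw [add_mul, add_mul, hgc, hgc']⟩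
  smul_mem' := by
    rintro s a ⟨ha, f, hf, g, hg, hfd, hgc⟩
    refine ⟨Submodule.smul_mem _ s ha, s * f, ?_, s * g, ?_, ?_, ?_⟩
    · simpa [smul_eq_mul] using Submodule.smul_mem _ s hf
    · simpa [smul_eq_mul] using Submodule.smul_mem _ s hg
    · show (s * a) * d = (s * f) * d
      rw [mul_assoc, hfd, mul_assoc]
    · show (s * a) * c = (s * g) * c
      rw [mul_assoc, hgc, mul_assoc]

lemma mem_Msub {R : Type*} [CommRing R] {c d r : R} :
    r ∈ Msub R c d ↔ r ∈ annI R (c * d) ∧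
      ∃ f ∈ annI R c, ∃ g ∈ annI R d, r * d = f * d ∧ r * c = g * c := Iff.rfl

end Core

section Helpers
variable {R : Type*} [CommRing R]

lemma dr_mem_annI {c d r : R} (hr : r ∈ annI R (c * d)) : d * r ∈ annI R c := by
  rw [mem_annI] at *
  rw [← mul_assoc]; exact hr

lemma cr_mem_annI {c d r : R} (hr : r ∈ annI R (c * d)) : c * r ∈ annI R d := by
  rw [mem_annI] at *
  calc d * (c * r) = c * d * r := by ring
  _ = 0 := hr

lemma ann_pair_Z {c d f g : R} (hf : f ∈ annI R c) (hg : g ∈ annI R d) :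
    c * f = d * g := by
  rw [mem_annI] at hf hg; rw [hf, hg]

lemma cf_mem_inf {c d f g : R} (h : c * f = d * g) :
    c * f ∈ Ideal.span {c} ⊓ Ideal.span {d} := by
  refine Submodule.mem_inf.mpr ⟨?_, ?_⟩
  · exact Ideal.mem_span_singleton.mpr ⟨f, rfl⟩
  · exact Ideal.mem_span_singleton.mpr ⟨g, h⟩

lemma rc_mem_inf_ann {c d r : R} (hr : r ∈ annI R (c * d)) :
    r * c ∈ Ideal.span {c} ⊓ annI R d := by
  rw [mem_annI] at hr
  refine Submodule.mem_inf.mpr ⟨Ideal.mem_span_singleton.mpr ⟨r, mul_comm r c⟩, ?_⟩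
  rw [mem_annI]
  calc d * (r * c) = c * d * r := by ring
  _ = 0 := hr

lemma rd_mem_ann_inf {c d r : R} (hr : r ∈ annI R (c * d)) :
    r * d ∈ annI R c ⊓ Ideal.span {d} := by
  rw [mem_annI] at hr
  refine Submodule.mem_inf.mpr ⟨?_, Ideal.mem_span_singleton.mpr ⟨r, mul_comm r d⟩⟩
  rw [mem_annI]
  calc c * (r * d) = c * d * r := by ring
  _ = 0 := hr

lemma HmkPQ {c d P Q : R} (hP : annI R c = Ideal.span {P}) (hQ : annI R d = Ideal.span {Q})
    (f g : R) : c * (f * P) = d * (g * Q) := by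
  have hp : c * P = 0 := by
    rw [← mem_annI (R := R)]
    rw [hP]
    exact Ideal.mem_span_singleton_self P
  have hq : d * Q = 0 := by
    rw [← mem_annI (R := R)]
    rw [hQ]
    exact Ideal.mem_span_singleton_self Q
  calc c * (f * P) = f * (c * P) := by ring
  _ = 0 := by rw [hp, mul_zero]
  _ = g * (d * Q) := by rw [hq, mul_zero]
  _ = d * (g * Q) := by ring

end Helpers

section QuotTypes
variable (R : Type*) [CommRing R]

/-- `ann(cd)/M`. -/
abbrev Tcd (c d : R) :=
  ↥(annI R (c * d)) ⧸ Submodule.comap (annI R (c * d)).subtype (Msub R c d)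

/-- `ann(c)/(ann(c)·(d))`. -/
abbrev Th (c d : R) :=
  ↥(annI R c) ⧸ Submodule.comap (annI R c).subtype (annI R c * Ideal.span {d})

/-- `ann(d)/((c)·ann(d))`. -/
abbrev Tv (c d : R) :=
  ↥(annI R d) ⧸ Submodule.comap (annI R d).subtype (Ideal.span {c} * annI R d)

/-- `((c) ∩ (d))/(cd)`. -/
abbrev T4 (c d : R) :=
  ↥(Ideal.span {c} ⊓ Ideal.span {d}) ⧸
    Submodule.comap (Ideal.span {c} ⊓ Ideal.span {d}).subtype (Ideal.span {c * d})

/-- `((c) ∩ ann(d))/((c)·ann(d))`. -/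
abbrev Tc' (c d : R) :=
  ↥(Ideal.span {c} ⊓ annI R d) ⧸
    Submodule.comap (Ideal.span {c} ⊓ annI R d).subtype (Ideal.span {c} * annI R d)

/-- `(ann(c) ∩ (d))/(ann(c)·(d))`. -/
abbrev Td' (c d : R) :=
  ↥(annI R c ⊓ Ideal.span {d}) ⧸
    Submodule.comap (annI R c ⊓ Ideal.span {d}).subtype (annI R c * Ideal.span {d})

/-- `φ : Z → R`, `(f, g) ↦ c·f`. -/
def phiZ (c d : R) : Zsub R c d →ₗ[R] R :=
  LinearMap.lsmul R R c ∘ₗ (LinearMap.fst R R R ∘ₗ (Zsub R c d).subtype)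

end QuotTypes


/-- The ring `F₂[x, y]/(xˡ − 1, yᵐ − 1)` underlying bivariate bicycle codes. -/
abbrev BBRing (l m : ℕ) : Type :=
  MvPolynomial (Fin 2) (ZMod 2) ⧸
    Ideal.span {(MvPolynomial.X 0 : MvPolynomial (Fin 2) (ZMod 2)) ^ l - 1,
      (MvPolynomial.X 1 : MvPolynomial (Fin 2) (ZMod 2)) ^ m - 1}

/-!
Since `l` and `m` are odd, a power of the Frobenius fixes `x` and `y`, hence is the identity on
`F₂[x, y]/(xˡ − 1, yᵐ − 1)`; so every element of this ring is von Neumann regular. Regularity of `c`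
gives `(c) ∩ (d) = (c d)`, which splits every cycle, modulo boundaries, into a horizontal and a
vertical one, and `(d) ∩ ann(c) = d ann(c)`, which makes the two parts independent. Finally `H_h` is
cyclic, generated by `[P, 0]`, and `f` kills `[P, 0]` iff `f P = d s P` for some `s`, that is, iff
`f - d s ∈ ann(P) = (c)`; likewise for `H_v`.
-/

/-- Von Neumann regularity of an element `a`. In a commutative ring it makes `a * b` an idempotent
generator of the ideal `(a)`. -/
def IsVonNeumannRegular {M : Type*} [Mul M] (a : M) : Prop :=
  ∃ b, a * b * a = a

namespace IsVonNeumannRegular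

lemma of_pow_eq_self {M : Type*} [Monoid M] {a : M} {n : ℕ} (hn : 1 < n) (h : a ^ n = a) :
    IsVonNeumannRegular a := by
  refine ⟨a ^ (n - 2), ?_⟩
  rw [← pow_succ', ← pow_succ, show n - 2 + 1 + 1 = n by lia, h]

variable {R : Type*} [CommRing R] {a c d r P : R}

lemma isPrincipal_annI (hc : IsVonNeumannRegular c) : (annI R c).IsPrincipal := by
  obtain ⟨c', hc⟩ := hc
  refine ⟨1 - c * c', Submodule.ext fun r => ?_⟩
  rw [mem_annI, Ideal.submodule_span_eq, Ideal.mem_span_singleton]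
  constructor
  · intro hr
    exact ⟨r, by linear_combination c' * hr⟩
  · rintro ⟨s, rfl⟩
    linear_combination -s * hc

lemma annI_generator_eq_span (hc : IsVonNeumannRegular c) (hP : annI R c = Ideal.span {P}) :
    annI R P = Ideal.span {c} := by
  obtain ⟨c', hc⟩ := hc
  have hcP : c * P = 0 := mem_annI.1 (hP ▸ Ideal.mem_span_singleton_self P)
  have hdvd : P ∣ 1 - c * c' := by
    rw [← Ideal.mem_span_singleton, ← hP, mem_annI]
    linear_combination -hc
  obtain ⟨t, ht⟩ := hdvd
  ext r
  rw [mem_annI, Ideal.mem_span_singleton]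
  constructor
  · intro hr
    exact ⟨c' * r, by linear_combination r * ht + t * hr⟩
  · rintro ⟨s, rfl⟩
    linear_combination s * hcP

lemma mul_dvd (hc : IsVonNeumannRegular c) (hca : c ∣ a) (hda : d ∣ a) : c * d ∣ a := by
  obtain ⟨c', hc⟩ := hc
  obtain ⟨f, rfl⟩ := hca
  obtain ⟨g, hg⟩ := hda
  exact ⟨c' * g, by linear_combination c * c' * hg - f * hc⟩

lemma exists_mem_annI_mul_eq (hc : IsVonNeumannRegular c) (h : d * r ∈ annI R c) :
    ∃ s ∈ annI R c, d * s = d * r := by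
  obtain ⟨c', hc⟩ := hc
  rw [mem_annI] at h
  refine ⟨(1 - c * c') * r, mem_annI.2 ?_, ?_⟩
  · linear_combination -r * hc
  · linear_combination -c' * h

end IsVonNeumannRegular

section Module
variable {R M : Type*} [CommRing R] [AddCommGroup M] [Module R M]

lemma exists_quotient_prod_linearEquiv_of_isCompl_span {x y : M} {I J : Ideal R}
    (hx : Ideal.torsionOf R M x = I) (hy : Ideal.torsionOf R M y = J)
    (h : IsCompl (R ∙ x) (R ∙ y)) :
    ∃ φ : ((R ⧸ I) × (R ⧸ J)) ≃ₗ[R] M,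
      ∀ f g : R, φ (Ideal.Quotient.mk I f, Ideal.Quotient.mk J g) = f • x + g • y := by
  subst hx hy
  exact ⟨(Ideal.quotTorsionOfEquivSpanSingleton R M x).prodCongr
    (Ideal.quotTorsionOfEquivSpanSingleton R M y) ≪≫ₗ prodEquivOfIsCompl _ _ h, fun _ _ => rfl⟩

lemma range_eq_span_singleton_apply {I : Ideal R} {p : I} (hI : I = Ideal.span {(p : R)})
    (φ : I →ₗ[R] M) : LinearMap.range φ = R ∙ φ p := by
  refine le_antisymm ?_ ((span_singleton_le_iff_mem _ _).2 ⟨p, rfl⟩)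
  rintro _ ⟨f, rfl⟩
  obtain ⟨r, hr⟩ := Ideal.mem_span_singleton'.1 (hI.le f.2)
  have hf : f = r • p := Subtype.ext hr.symm
  rw [hf, map_smul]
  exact mem_span_singleton.2 ⟨r, rfl⟩

end Module

section Homology
variable {R : Type*} [CommRing R] {c d : R}

lemma Hmk_eq_Hmk_iff {f g f₁ g₁ : R} (h : c * f = d * g) (h₁ : c * f₁ = d * g₁) :
    Hmk R c d f g h = Hmk R c d f₁ g₁ h₁ ↔ ∃ r, d * r = f - f₁ ∧ c * r = g - g₁ := by
  rw [Hmk, Hmk, Submodule.Quotient.eq]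
  simp [Bsub]

lemma Hmk_eq_zero_iff {f g : R} (h : c * f = d * g) :
    Hmk R c d f g h = 0 ↔ ∃ r, d * r = f ∧ c * r = g := by
  rw [Hmk, Submodule.Quotient.mk_eq_zero]
  simp [Bsub]

variable (c d) in
/-- The map `f ↦ [f, 0]` from `ann(c)` to `H`, whose image is `H_h`. -/
def horizontalClass : annI R c →ₗ[R] Hmod R c d :=
  mkQ _ ∘ₗ (LinearMap.inl R R R ∘ₗ (annI R c).subtype).codRestrict (Zsub R c d)
    fun f => ann_pair_Z f.2 (zero_mem _)

variable (c d) in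
/-- The map `g ↦ [0, g]` from `ann(d)` to `H`, whose image is `H_v`. -/
def verticalClass : annI R d →ₗ[R] Hmod R c d :=
  mkQ _ ∘ₗ (LinearMap.inr R R R ∘ₗ (annI R d).subtype).codRestrict (Zsub R c d)
    fun g => ann_pair_Z (zero_mem _) g.2

lemma horizontalClass_eq_Hmk (f : annI R c) :
    horizontalClass c d f = Hmk R c d f 0 (ann_pair_Z f.2 (zero_mem _)) := rfl

lemma verticalClass_eq_Hmk (g : annI R d) :
    verticalClass c d g = Hmk R c d 0 g (ann_pair_Z (zero_mem _) g.2) := rfl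

lemma horizontalClass_add_verticalClass (f : annI R c) (g : annI R d) :
    horizontalClass c d f + verticalClass c d g = Hmk R c d f g (ann_pair_Z f.2 g.2) := by
  rw [horizontalClass_eq_Hmk, verticalClass_eq_Hmk, Hmk, Hmk, ← Submodule.Quotient.mk_add, Hmk]
  congr 1
  ext <;> simp

lemma horizontalClass_eq_zero_iff {f : annI R c} :
    horizontalClass c d f = 0 ↔ ∃ r ∈ annI R c, d * r = f := by
  simp only [horizontalClass_eq_Hmk, Hmk_eq_zero_iff, mem_annI, and_comm]

lemma verticalClass_eq_zero_iff {g : annI R d} :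
    verticalClass c d g = 0 ↔ ∃ r ∈ annI R d, c * r = g := by
  simp only [verticalClass_eq_Hmk, Hmk_eq_zero_iff, mem_annI]

lemma Hpureh_eq_range : Hpureh R c d = LinearMap.range (horizontalClass c d) := by
  rw [← span_eq (LinearMap.range (horizontalClass c d)), Hpureh]
  congr 1
  ext h
  constructor
  · rintro ⟨f, hf, rfl⟩
    exact ⟨⟨f, mem_annI.2 (by rw [hf, mul_zero])⟩, rfl⟩
  · rintro ⟨f, rfl⟩
    exact ⟨f, _, horizontalClass_eq_Hmk f⟩

lemma Hpurev_eq_range : Hpurev R c d = LinearMap.range (verticalClass c d) := by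
  rw [← span_eq (LinearMap.range (verticalClass c d)), Hpurev]
  congr 1
  ext h
  constructor
  · rintro ⟨g, hg, rfl⟩
    exact ⟨⟨g, mem_annI.2 (by rw [← hg, mul_zero])⟩, rfl⟩
  · rintro ⟨g, rfl⟩
    exact ⟨g, _, verticalClass_eq_Hmk g⟩

lemma disjoint_Hpureh_Hpurev (hc : IsVonNeumannRegular c) :
    Disjoint (Hpureh R c d) (Hpurev R c d) := by
  rw [Hpureh_eq_range, Hpurev_eq_range, Submodule.disjoint_def]
  rintro _ ⟨f, rfl⟩ ⟨g, hgf⟩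
  rw [verticalClass_eq_Hmk, horizontalClass_eq_Hmk, eq_comm, Hmk_eq_Hmk_iff] at hgf
  obtain ⟨r, hr, -⟩ := hgf
  rw [sub_zero] at hr
  obtain ⟨s, hs, hsr⟩ := hc.exists_mem_annI_mul_eq (hr ▸ f.2)
  exact horizontalClass_eq_zero_iff.2 ⟨s, hs, hsr.trans hr⟩

lemma codisjoint_Hpureh_Hpurev (hc : IsVonNeumannRegular c) :
    Codisjoint (Hpureh R c d) (Hpurev R c d) := by
  rw [Hpureh_eq_range, Hpurev_eq_range, codisjoint_iff, eq_top_iff]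
  intro x _
  obtain ⟨⟨⟨f, g⟩, h⟩, rfl⟩ := Submodule.Quotient.mk_surjective _ x
  rw [mem_Zsub] at h
  obtain ⟨r, hr⟩ := hc.mul_dvd (Dvd.intro f rfl) (Dvd.intro g h.symm)
  have hf : f - d * r ∈ annI R c := mem_annI.2 (by linear_combination hr)
  have hg : g - c * r ∈ annI R d := mem_annI.2 (by linear_combination hr - h)
  refine mem_sup.2 ⟨_, ⟨⟨_, hf⟩, rfl⟩, _, ⟨⟨_, hg⟩, rfl⟩, ?_⟩
  rw [horizontalClass_add_verticalClass]
  exact (Hmk_eq_Hmk_iff _ h).2 ⟨-r, by ring, by ring⟩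

lemma isCompl_Hpureh_Hpurev (hc : IsVonNeumannRegular c) :
    IsCompl (Hpureh R c d) (Hpurev R c d) :=
  ⟨disjoint_Hpureh_Hpurev hc, codisjoint_Hpureh_Hpurev hc⟩

lemma exists_mem_annI_mul_eq_iff_mem_span_pair {f P : R} (hP : annI R c = Ideal.span {P})
    (hc : annI R P = Ideal.span {c}) :
    (∃ r ∈ annI R c, d * r = f * P) ↔ f ∈ Ideal.span {c, d} := by
  simp only [hP, Ideal.mem_span_singleton', Ideal.mem_span_pair]
  constructor
  · rintro ⟨_, ⟨s, rfl⟩, hs⟩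
    have hfs : f - d * s ∈ annI R P := mem_annI.2 (by linear_combination -hs)
    rw [hc, Ideal.mem_span_singleton'] at hfs
    obtain ⟨t, ht⟩ := hfs
    exact ⟨t, s, by linear_combination ht⟩
  · rintro ⟨t, s, rfl⟩
    have hPc : P * c = 0 := mem_annI.1 (hc ▸ Ideal.mem_span_singleton_self c)
    exact ⟨s * P, ⟨s, rfl⟩, by linear_combination -t * hPc⟩

lemma torsionOf_horizontalClass {P : annI R c} (hP : annI R c = Ideal.span {(P : R)})
    (hc : annI R (P : R) = Ideal.span {c}) :
    Ideal.torsionOf R (Hmod R c d) (horizontalClass c d P) = Ideal.span {c, d} := by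
  ext f
  rw [Ideal.mem_torsionOf_iff, ← map_smul, horizontalClass_eq_zero_iff]
  exact exists_mem_annI_mul_eq_iff_mem_span_pair hP hc

lemma torsionOf_verticalClass {Q : annI R d} (hQ : annI R d = Ideal.span {(Q : R)})
    (hd : annI R (Q : R) = Ideal.span {d}) :
    Ideal.torsionOf R (Hmod R c d) (verticalClass c d Q) = Ideal.span {c, d} := by
  ext g
  rw [Ideal.mem_torsionOf_iff, ← map_smul, verticalClass_eq_zero_iff, Ideal.span_pair_comm]
  exact exists_mem_annI_mul_eq_iff_mem_span_pair hQ hd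

lemma exists_linearMap_bijective_of_annI_eq_span {P Q : R} (hc : IsVonNeumannRegular c)
    (hd : IsVonNeumannRegular d) (hP : annI R c = Ideal.span {P})
    (hQ : annI R d = Ideal.span {Q}) :
    ∃ φ : (R ⧸ Ideal.span {c, d}) × (R ⧸ Ideal.span {c, d}) →ₗ[R] Hmod R c d,
      (∀ f g : R,
        φ (Ideal.Quotient.mk (Ideal.span {c, d}) f, Ideal.Quotient.mk (Ideal.span {c, d}) g) =
          Hmk R c d (f * P) (g * Q) (HmkPQ hP hQ f g)) ∧
      Function.Bijective φ := by
  lift P to annI R c using hP ▸ Ideal.mem_span_singleton_self P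
  lift Q to annI R d using hQ ▸ Ideal.mem_span_singleton_self Q
  have hPQ : IsCompl (R ∙ horizontalClass c d P) (R ∙ verticalClass c d Q) := by
    rw [← range_eq_span_singleton_apply hP, ← range_eq_span_singleton_apply hQ,
      ← Hpureh_eq_range, ← Hpurev_eq_range]
    exact isCompl_Hpureh_Hpurev hc
  have torsion_P := torsionOf_horizontalClass (d := d) hP (hc.annI_generator_eq_span hP)
  have torsion_Q := torsionOf_verticalClass (c := c) hQ (hd.annI_generator_eq_span hQ)
  obtain ⟨φ, hφ⟩ := exists_quotient_prod_linearEquiv_of_isCompl_span torsion_P torsion_Q hPQ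
  refine ⟨φ, fun f g => ?_, φ.bijective⟩
  rw [LinearEquiv.coe_coe, hφ, ← map_smul, ← map_smul, horizontalClass_add_verticalClass]
  rfl

end Homology

section FiniteField
variable {K A : Type*} [Field K] [Fintype K] [CommRing A] [Algebra K A] {s : Set A} {n : ℕ}

lemma pow_card_pow_totient_eq_self_of_adjoin_eq_top (hs : Algebra.adjoin K s = ⊤)
    (hn : (Fintype.card K).Coprime n) (h : ∀ x ∈ s, x ^ n = 1) (a : A) :
    a ^ Fintype.card K ^ n.totient = a := by
  have frobenius_pow_eq : FiniteField.frobeniusAlgHom K A ^ n.totient = 1 :=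
    AlgHom.ext_of_adjoin_eq_top hs fun x hx => by
      simpa [FiniteField.coe_frobeniusAlgHom, AlgHom.coe_pow, pow_iterate] using
        pow_eq_pow_of_modEq (Nat.ModEq.pow_totient hn) (h x hx)
  simpa [AlgHom.coe_pow, FiniteField.coe_frobeniusAlgHom, pow_iterate] using
    DFunLike.congr_fun frobenius_pow_eq a

lemma IsVonNeumannRegular.of_adjoin_eq_top (hs : Algebra.adjoin K s = ⊤)
    (hn : (Fintype.card K).Coprime n) (h : ∀ x ∈ s, x ^ n = 1) (a : A) :
    IsVonNeumannRegular a := by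
  have hn₀ : n ≠ 0 := by
    rintro rfl
    exact Fintype.one_lt_card.ne' ((Nat.coprime_zero_right _).1 hn)
  exact .of_pow_eq_self
    (Nat.one_lt_pow (Nat.totient_pos.2 (Nat.pos_of_ne_zero hn₀)).ne' Fintype.one_lt_card)
    (pow_card_pow_totient_eq_self_of_adjoin_eq_top hs hn h a)

end FiniteField

lemma adjoin_range_mk_X_eq_top {σ R : Type*} [CommRing R] (I : Ideal (MvPolynomial σ R)) :
    Algebra.adjoin R (Set.range fun i => Ideal.Quotient.mk I (MvPolynomial.X i)) = ⊤ := by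
  have h := congrArg (Subalgebra.map (Ideal.Quotient.mkₐ R I))
    (MvPolynomial.adjoin_range_X (R := R) (σ := σ))
  rwa [AlgHom.map_adjoin, ← Set.range_comp, Algebra.map_top,
    (AlgHom.range_eq_top _).2 (Ideal.Quotient.mkₐ_surjective R I)] at h

namespace BBRing

lemma mk_X_pow_mul_eq_one (l m : ℕ) :
    ∀ i : Fin 2, (Ideal.Quotient.mk _ (MvPolynomial.X i) : BBRing l m) ^ (l * m) = 1 := by
  have hx : (Ideal.Quotient.mk _ (MvPolynomial.X 0) : BBRing l m) ^ l = 1 :=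
    Ideal.Quotient.eq.2 (Ideal.subset_span (by simp))
  have hy : (Ideal.Quotient.mk _ (MvPolynomial.X 1) : BBRing l m) ^ m = 1 :=
    Ideal.Quotient.eq.2 (Ideal.subset_span (by simp))
  rw [Fin.forall_fin_two]
  constructor
  · rw [pow_mul, hx, one_pow]
  · rw [pow_mul', hy, one_pow]

lemma isVonNeumannRegular {l m : ℕ} (hl : Odd l) (hm : Odd m) (a : BBRing l m) :
    IsVonNeumannRegular a := by
  have hlm : (Fintype.card (ZMod 2)).Coprime (l * m) := by
    rw [ZMod.card, Nat.coprime_two_left]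
    exact hl.mul hm
  refine .of_adjoin_eq_top (adjoin_range_mk_X_eq_top _) hlm ?_ a
  rintro _ ⟨i, rfl⟩
  exact mk_X_pow_mul_eq_one l m i

end BBRing

theorem stmt13_general {R : Type*} [CommRing R] {c d : R} (hc : IsVonNeumannRegular c)
    (hd : IsVonNeumannRegular d) :
    (Hpureh R c d ⊔ Hpurev R c d = ⊤ ∧ Hpureh R c d ⊓ Hpurev R c d = ⊥) ∧
    (annI R c).IsPrincipal ∧ (annI R d).IsPrincipal ∧
    ∀ (P Q : R) (hP : annI R c = Ideal.span {P}) (hQ : annI R d = Ideal.span {Q}),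
      ∃ φ : (R ⧸ Ideal.span {c, d}) × (R ⧸ Ideal.span {c, d}) →ₗ[R] Hmod R c d,
        (∀ f g : R,
          φ (Ideal.Quotient.mk (Ideal.span {c, d}) f, Ideal.Quotient.mk (Ideal.span {c, d}) g) =
            Hmk R c d (f * P) (g * Q) (HmkPQ hP hQ f g)) ∧
        Function.Bijective φ := by
  have h : IsCompl (Hpureh R c d) (Hpurev R c d) := isCompl_Hpureh_Hpurev hc
  exact ⟨⟨h.sup_eq_top, h.inf_eq_bot⟩, hc.isPrincipal_annI, hd.isPrincipal_annI,
    fun _ _ => exists_linearMap_bijective_of_annI_eq_span hc hd⟩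

theorem stmt13 (l m : ℕ) (hl : Odd l) (hm : Odd m) (c d : BBRing l m) :
    (Hpureh (BBRing l m) c d ⊔ Hpurev (BBRing l m) c d = ⊤ ∧
     Hpureh (BBRing l m) c d ⊓ Hpurev (BBRing l m) c d = ⊥) ∧
    ∃ P Q : BBRing l m,
      ∃ (hP : annI (BBRing l m) c = Ideal.span {P})
        (hQ : annI (BBRing l m) d = Ideal.span {Q}),
      ∃ φ : (BBRing l m ⧸ Ideal.span {c, d}) × (BBRing l m ⧸ Ideal.span {c, d})
          →ₗ[BBRing l m] Hmod (BBRing l m) c d,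
        (∀ f g : BBRing l m,
          φ (Ideal.Quotient.mk (Ideal.span {c, d}) f,
             Ideal.Quotient.mk (Ideal.span {c, d}) g) =
            Hmk (BBRing l m) c d (f * P) (g * Q) (HmkPQ hP hQ f g)) ∧
        Function.Bijective φ := by
  obtain ⟨hH, ⟨P, hP⟩, ⟨Q, hQ⟩, hφ⟩ :=
    stmt13_general (BBRing.isVonNeumannRegular hl hm c) (BBRing.isVonNeumannRegular hl hm d)
  exact ⟨hH, P, Q, hP, hQ, hφ P Q hP hQ⟩
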